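/- Let r ≥ 1 and ε ≥ 1 be integers and let σ ∈ {+1, −1}. For all positive real numbers α_0, α_1 and all integers l_0, l̃_0, l_1, l̃_1 with 0 ≤ l_0, l̃_0, l_1, l̃_1 ≤ 2^r − 1: if α_0 · e^{i·2πl_0/2^r} + α_1 · e^{i(2πl_1/2^r + σπ/2^{r+ε})} = α_0 · e^{i·2πl̃_0/2^r} + α_1 · e^{i(2πl̃_1/2^r + σπ/2^{r+ε})}, then l_0 = l̃_0 and l_1 = l̃_1. In other words, the phase constellations S_0 = {e^{i·2πl/2^r} : 0 ≤ l ≤ 2^r−1} and S_{1} = e^{iσπ/2^{r+ε}}·S_0 form a UDCP with respect to any positive weights. (Step 1 of the proof of Proposition 1) -/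

import Mathlib

theorem aux_sin (r l l' : ℕ) (hl : l ≤ 2 ^ r - 1) (hl' : l' ≤ 2 ^ r - 1)
    (h : Real.sin ((2 * Real.pi * (l : ℝ) / 2 ^ r - 2 * Real.pi * (l' : ℝ) / 2 ^ r) / 2) = 0) :
    l = l' := by
  obtain ⟨n, hn⟩ := Real.sin_eq_zero_iff.mp h
  have hp := Real.pi_pos
  have h2 : (0 : ℝ) < 2 ^ r := by positivity
  have e : (n : ℝ) * 2 ^ r = l - l' := by
    apply mul_left_cancel₀ hp.ne'
    field_simp at hn
    rw [hn]
  have e' : n * 2 ^ r = (l : ℤ) - l' := by exact_mod_cast e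
  have h3 : 0 < 2 ^ r := by positivity
  have a1 : (l : ℤ) < 2 ^ r := by
    have : l < 2 ^ r := by omega
    exact_mod_cast this
  have a2 : (l' : ℤ) < 2 ^ r := by
    have : l' < 2 ^ r := by omega
    exact_mod_cast this
  have hn0 : n = 0 := by
    have : n < 1 := by nlinarith
    have : -1 < n := by nlinarith
    omega
  subst hn0
  omega

/-- **Step 1 of the proof of Proposition 1.** The base phase constellation
`S₀ = {e^{i·2πl/2^r}}` and its rotation by `σ·π/2^(r+ε)` (with `σ = ±1`) form a UDCP
with respect to arbitrary positive weights. -/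
theorem step1_UDCP
    (r ε : ℕ) (hr : 1 ≤ r) (hε : 1 ≤ ε)
    (σ : ℝ) (hσ : σ = 1 ∨ σ = -1)
    (α0 α1 : ℝ) (hα0 : 0 < α0) (hα1 : 0 < α1)
    (l0 l0' l1 l1' : ℕ)
    (hl0 : l0 ≤ 2 ^ r - 1) (hl0' : l0' ≤ 2 ^ r - 1)
    (hl1 : l1 ≤ 2 ^ r - 1) (hl1' : l1' ≤ 2 ^ r - 1)
    (heq : (α0 : ℂ) * Complex.exp (Complex.I * ((2 * Real.pi * (l0 : ℝ) / 2 ^ r : ℝ) : ℂ))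
        + (α1 : ℂ) * Complex.exp (Complex.I *
            ((2 * Real.pi * (l1 : ℝ) / 2 ^ r + σ * Real.pi / 2 ^ (r + ε) : ℝ) : ℂ))
      = (α0 : ℂ) * Complex.exp (Complex.I * ((2 * Real.pi * (l0' : ℝ) / 2 ^ r : ℝ) : ℂ))
        + (α1 : ℂ) * Complex.exp (Complex.I *
            ((2 * Real.pi * (l1' : ℝ) / 2 ^ r + σ * Real.pi / 2 ^ (r + ε) : ℝ) : ℂ))) :
    l0 = l0' ∧ l1 = l1' := by
  simp only [mul_comm Complex.I] at heq
  have hre := congrArg Complex.re heq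
  have him := congrArg Complex.im heq
  simp only [Complex.add_re, Complex.add_im, Complex.re_ofReal_mul, Complex.im_ofReal_mul,
    Complex.exp_ofReal_mul_I_re, Complex.exp_ofReal_mul_I_im] at hre him
  set a := 2 * Real.pi * (l0 : ℝ) / 2 ^ r with ha
  set a' := 2 * Real.pi * (l0' : ℝ) / 2 ^ r with ha'
  set t := σ * Real.pi / 2 ^ (r + ε) with ht
  set c := 2 * Real.pi * (l1 : ℝ) / 2 ^ r with hc
  set c' := 2 * Real.pi * (l1' : ℝ) / 2 ^ r with hc'
  have e1 := Real.cos_sub_cos a a'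
  have e2 := Real.cos_sub_cos (c + t) (c' + t)
  have e3 := Real.sin_sub_sin a a'
  have e4 := Real.sin_sub_sin (c + t) (c' + t)
  rw [show (c + t) - (c' + t) = c - c' by ring] at e2 e4
  set A := (a + a') / 2 with hA
  set B := (c + t + (c' + t)) / 2 with hB
  have hne : Real.sin (A - B) ≠ 0 := by
    intro h
    obtain ⟨n, hn⟩ := Real.sin_eq_zero_iff.mp h
    have hp := Real.pi_pos
    have key : (n : ℝ) * 2 ^ r * 2 ^ ε = ((l0 : ℝ) + l0' - l1 - l1') * 2 ^ ε - σ := by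
      apply mul_left_cancel₀ hp.ne'
      have : A - B = Real.pi * (((l0 : ℝ) + l0' - l1 - l1') / 2 ^ r - σ / (2 ^ r * 2 ^ ε)) := by
        rw [hA, hB, ha, ha', hc, hc', ht, pow_add]
        ring
      rw [this] at hn
      field_simp at hn
      linear_combination Real.pi * hn
    obtain ⟨k, rfl⟩ : ∃ k, ε = k + 1 := ⟨ε - 1, by omega⟩
    rcases hσ with rfl | rfl
    · have k2 : n * 2 ^ r * 2 ^ (k + 1) = ((l0 : ℤ) + l0' - l1 - l1') * 2 ^ (k + 1) - 1 := by
        exact_mod_cast key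
      rw [pow_succ, ← mul_assoc, ← mul_assoc] at k2
      omega
    · have k2 : n * 2 ^ r * 2 ^ (k + 1) = ((l0 : ℤ) + l0' - l1 - l1') * 2 ^ (k + 1) - (-1) := by
        exact_mod_cast key
      rw [pow_succ, ← mul_assoc, ← mul_assoc] at k2
      omega
  have f1 : α0 * (Real.sin A * Real.sin ((a - a') / 2))
      + α1 * (Real.sin B * Real.sin ((c - c') / 2)) = 0 := by
    linear_combination (-1/2) * hre + (α0 / 2) * e1 + (α1 / 2) * e2
  have f2 : α0 * (Real.cos A * Real.sin ((a - a') / 2))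
      + α1 * (Real.cos B * Real.sin ((c - c') / 2)) = 0 := by
    linear_combination (1/2) * him - (α0 / 2) * e3 - (α1 / 2) * e4
  have g := Real.sin_sub A B
  have g1 : α0 * Real.sin (A - B) * Real.sin ((a - a') / 2) = 0 := by
    rw [g]; linear_combination Real.cos B * f1 - Real.sin B * f2
  have g2 : α1 * Real.sin (A - B) * Real.sin ((c - c') / 2) = 0 := by
    rw [g]; linear_combination Real.sin A * f2 - Real.cos A * f1
  constructor
  · exact aux_sin r l0 l0' hl0 hl0' ((mul_eq_zero.mp g1).resolve_left (mul_ne_zero hα0.ne' hne))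
  · exact aux_sin r l1 l1' hl1 hl1' ((mul_eq_zero.mp g2).resolve_left (mul_ne_zero hα1.ne' hne))
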